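/- arXiv:math/0412067 — 4 statements merged into one kernel-verified Lean document; each statement's English description precedes it below -/
import Mathlib

section
/- Let q be real with 0 < q < 1, let r ≥ 1 be an integer, let s, t ∈ ℂ with Re(t) > r − 1, and let z ∈ ℂ with Re(z) > 0. Then the ladder relation ζ_{q,r}(s,t,z) = q^{t−r+1} · ζ_{q,r}(s,t,z+1) + ζ_{q,r−1}(s,t,z) holds, where ζ_{q,0}(s,t,z) := [z]_q^{−s}. -/
/-!
The summand of `ζ_{q,r}(s,t,z)` is `a₁^{n₁} ⋯ a_r^{n_r} · φ(n₁ + ⋯ + n_r)` with `a_i = q^{t-i+1}`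
and `φ(N) = [N+z]_q^{-s}`. The terms with `n_r = 0` form the same sum without the last ratio, and
lowering `n_r` by one in the others costs a factor `a_r` and shifts `φ` by one, which is the shift
`z ↦ z + 1`.

Absolute convergence justifies the splitting: `|a_i| ≤ |a_r| < 1` for all `i`, and `φ` is bounded
because `[N+z]_q → 1/(1-q)`, a positive real, where the principal power is continuous and nonzero.
-/

open Complex

/-- `[w]_q = (1 - q^w)/(1 - q)` for real `0 < q < 1` and complex `w`
(principal complex power of the positive real `q`). -/
noncomputable def qNum (q : ℝ) (w : ℂ) : ℂ := (1 - (q : ℂ) ^ w) / (1 - (q : ℂ))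

/-- The `q`-analogue `ζ_{q,r}(s,t,z)` of the Barnes multiple zeta function,
defined as a sum over all `r`-tuples `(n₁,…,n_r)` of nonnegative integers of
`q^{n₁ t + n₂(t−1) + ⋯ + n_r(t−r+1)} / [n₁+⋯+n_r+z]_q^s`.
For `r = 0` this is `[z]_q^{-s} = 1/[z]_q^s`. -/
noncomputable def zetaQ (q : ℝ) (r : ℕ) (s t z : ℂ) : ℂ :=
  ∑' f : Fin r → ℕ,
    (q : ℂ) ^ (∑ i : Fin r, (f i : ℂ) * (t - (i : ℕ)))
      / (qNum q (((∑ i : Fin r, f i : ℕ) : ℂ) + z)) ^ s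

open Filter Topology Bornology

section MultiGeomSum

variable {R : Type*} [NormedCommRing R] {k : ℕ}

/-- The sum of `a₁^{n₁} ⋯ a_k^{n_k} · φ(n₁ + ⋯ + n_k)` over all `k`-tuples of natural numbers, a
geometric series in several ratios weighted by the total degree. As a `tsum` it is `0` when the
family is not summable. -/
noncomputable def multiGeomSum (a : Fin k → R) (φ : ℕ → R) : R :=
  ∑' f : Fin k → ℕ, (∏ i, a i ^ f i) * φ (∑ i, f i)

lemma summable_norm_prod_pow {a : Fin k → R} (ha : ∀ i, ‖a i‖ < 1) :
    Summable fun f : Fin k → ℕ => ‖∏ i, a i ^ f i‖ := by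
  induction k with
  | zero => exact .of_finite
  | succ k ih =>
    have hprod := (summable_norm_geometric_of_norm_lt_one (ha 0)).mul_norm (ih fun i => ha i.succ)
    rw [← (Fin.consEquiv fun _ => ℕ).summable_iff]
    exact hprod.congr fun p => by simp [Fin.consEquiv, Fin.prod_univ_succ]

variable [CompleteSpace R]

lemma summable_prod_pow_mul_of_isBounded {a : Fin k → R} (ha : ∀ i, ‖a i‖ < 1) {φ : ℕ → R}
    (hφ : IsBounded (Set.range φ)) :
    Summable fun f : Fin k → ℕ => (∏ i, a i ^ f i) * φ (∑ i, f i) := by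
  obtain ⟨C, hC⟩ := hφ.exists_norm_le
  refine .of_norm_bounded ((summable_norm_prod_pow ha).mul_right C) fun f => ?_
  exact norm_mul_le_of_le le_rfl (hC _ ⟨_, rfl⟩)

lemma hasSum_pow_last_mul_multiGeomSum_init {a : Fin (k + 1) → R} (ha : ∀ i, ‖a i‖ < 1)
    {φ : ℕ → R} (hφ : IsBounded (Set.range φ)) :
    HasSum (fun n => a (Fin.last k) ^ n * multiGeomSum (Fin.init a) fun N => φ (N + n))
      (multiGeomSum a φ) := by
  have htotal := (Fin.snocEquiv fun _ => ℕ).hasSum_iff.2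
    (summable_prod_pow_mul_of_isBounded ha hφ).hasSum
  refine htotal.prod_fiberwise fun n => ?_
  have hφn : IsBounded (Set.range fun N => φ (N + n)) :=
    hφ.subset (Set.range_comp_subset_range (· + n) φ)
  have hfiber := summable_prod_pow_mul_of_isBounded (a := Fin.init a) (fun i => ha i.castSucc) hφn
  refine (hfiber.hasSum.mul_left (a (Fin.last k) ^ n)).congr_fun fun f => ?_
  simp only [Function.comp_apply, Fin.snocEquiv, Equiv.coe_fn_mk, Fin.prod_univ_castSucc,
    Fin.sum_univ_castSucc, Fin.snoc_castSucc, Fin.snoc_last, Fin.init]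
  ring

theorem multiGeomSum_succ {a : Fin (k + 1) → R} (ha : ∀ i, ‖a i‖ < 1) {φ : ℕ → R}
    (hφ : IsBounded (Set.range φ)) :
    multiGeomSum a φ =
      a (Fin.last k) * multiGeomSum a (fun N => φ (N + 1)) + multiGeomSum (Fin.init a) φ := by
  have hφ' : IsBounded (Set.range fun N => φ (N + 1)) :=
    hφ.subset (Set.range_comp_subset_range (· + 1) φ)
  have hsucc : HasSum
      (fun n => a (Fin.last k) ^ (n + 1) * multiGeomSum (Fin.init a) fun N => φ (N + (n + 1)))
      (a (Fin.last k) * multiGeomSum a fun N => φ (N + 1)) := by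
    simpa only [pow_succ', mul_assoc, add_assoc] using
      (hasSum_pow_last_mul_multiGeomSum_init ha hφ').mul_left (a (Fin.last k))
  rw [(hasSum_pow_last_mul_multiGeomSum_init ha hφ).unique hsucc.zero_add]
  simp [add_comm]

end MultiGeomSum

lemma norm_cpow_sub_natCast_lt_one {q w : ℂ} (hq0 : q ≠ 0) (hq1 : ‖q‖ ≤ 1) {m n : ℕ} (hmn : m ≤ n)
    (hw : ‖q ^ (w - n)‖ < 1) : ‖q ^ (w - m)‖ < 1 := by
  have hsplit : q ^ (w - m) = q ^ (w - n) * q ^ (n - m) := by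
    rw [← cpow_natCast, ← cpow_add _ _ hq0, Nat.cast_sub hmn]
    ring_nf
  rw [hsplit, norm_mul, norm_pow]
  exact mul_lt_one_of_nonneg_of_lt_one_left (norm_nonneg _) hw (pow_le_one₀ (norm_nonneg _) hq1)

lemma cpow_sum_natCast_mul {ι : Type*} {q : ℂ} (hq : q ≠ 0) (s : Finset ι) (f : ι → ℕ) (w : ι → ℂ) :
    q ^ (∑ i ∈ s, (f i : ℂ) * w i) = ∏ i ∈ s, (q ^ w i) ^ f i := by
  simp only [cpow_def_of_ne_zero hq, Finset.mul_sum, exp_sum, ← exp_nat_mul, mul_left_comm]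

section QNum

variable {q : ℝ}

lemma tendsto_qNum_natCast_add (hq0 : q ≠ 0) (hq1 : |q| < 1) (z : ℂ) :
    Tendsto (fun N : ℕ => qNum q (N + z)) atTop (𝓝 ((1 - q)⁻¹ : ℝ)) := by
  have hq0' : (q : ℂ) ≠ 0 := ofReal_ne_zero.2 hq0
  have hpow : Tendsto (fun N : ℕ => (q : ℂ) ^ (N + z)) atTop (𝓝 0) := by
    simp only [cpow_add _ _ hq0', cpow_natCast]
    simpa using (tendsto_pow_atTop_nhds_zero_of_norm_lt_one
      (by simpa using hq1 : ‖(q : ℂ)‖ < 1)).mul_const ((q : ℂ) ^ z)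
  simpa [qNum] using (hpow.const_sub 1).div_const (1 - (q : ℂ))

lemma isBounded_range_inv_qNum_cpow (hq0 : q ≠ 0) (hq1 : |q| < 1) (s z : ℂ) :
    IsBounded (Set.range fun N : ℕ => (qNum q (N + z) ^ s)⁻¹) := by
  have hlim : (((1 - q)⁻¹ : ℝ) : ℂ) ∈ slitPlane :=
    ofReal_mem_slitPlane.2 (inv_pos.2 (sub_pos.2 (lt_of_abs_lt hq1)))
  have hcpow := (continuousAt_cpow_const (b := s) hlim).tendsto.comp
    (tendsto_qNum_natCast_add hq0 hq1 z)
  exact Metric.isBounded_range_of_tendsto _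
    (hcpow.inv₀ (cpow_ne_zero_iff.2 (.inl (slitPlane_ne_zero hlim))))

lemma zetaQ_eq_multiGeomSum (hq : q ≠ 0) (r : ℕ) (s t z : ℂ) :
    zetaQ q r s t z =
      multiGeomSum (fun i : Fin r => (q : ℂ) ^ (t - (i : ℕ)))
        fun N => (qNum q (N + z) ^ s)⁻¹ := by
  simp only [zetaQ, multiGeomSum, cpow_sum_natCast_mul (ofReal_ne_zero.2 hq), div_eq_mul_inv]

/-- At a zero of `[n₁ + ⋯ + n_r + z]_q` the term of the series is read as `1 / 0 ^ s`, which in Lean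
is `0` unless `s = 0`. -/
theorem zetaQ_ladder_general (hq0 : q ≠ 0) (hq1 : |q| < 1) {r : ℕ} (hr : 1 ≤ r) (s : ℂ) {t : ℂ}
    (ht : ‖(q : ℂ) ^ (t - r + 1)‖ < 1) (z : ℂ) :
    zetaQ q r s t z = (q : ℂ) ^ (t - r + 1) * zetaQ q r s t (z + 1) + zetaQ q (r - 1) s t z := by
  obtain ⟨k, rfl⟩ := Nat.exists_eq_add_of_le' hr
  have hexp : t - (k + 1 : ℕ) + 1 = t - k := by push_cast; ring
  rw [hexp] at ht ⊢
  have hratio (i : Fin (k + 1)) : ‖(q : ℂ) ^ (t - (i : ℕ))‖ < 1 :=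
    norm_cpow_sub_natCast_lt_one (ofReal_ne_zero.2 hq0) (by simpa using hq1.le)
      (Nat.lt_succ_iff.1 i.isLt) ht
  have hshift (N : ℕ) : ((N + 1 : ℕ) : ℂ) + z = N + (z + 1) := by push_cast; ring
  simp only [zetaQ_eq_multiGeomSum hq0, Nat.add_sub_cancel]
  rw [multiGeomSum_succ hratio (isBounded_range_inv_qNum_cpow hq0 hq1 s z)]
  simp only [hshift, Fin.val_last, Fin.init_def, Fin.val_castSucc]

lemma norm_ofReal_cpow_lt_one (hq0 : 0 < q) (hq1 : q < 1) {w : ℂ} (hw : 0 < w.re) :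
    ‖(q : ℂ) ^ w‖ < 1 := by
  rw [norm_cpow_eq_rpow_re_of_pos hq0]
  exact Real.rpow_lt_one hq0.le hq1 hw

end QNum

/-- The ladder relation
`ζ_{q,r}(s,t,z) = q^{t−r+1} ζ_{q,r}(s,t,z+1) + ζ_{q,r−1}(s,t,z)`
for `0 < q < 1`, `r ≥ 1`, `Re t > r − 1` and `Re z > 0`. -/
theorem zetaQ_ladder (q : ℝ) (hq0 : 0 < q) (hq1 : q < 1) (r : ℕ) (hr : 1 ≤ r)
    (s t z : ℂ) (ht : (r : ℝ) - 1 < t.re) (hz : 0 < z.re) :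
    zetaQ q r s t z
      = (q : ℂ) ^ (t - (r : ℂ) + 1) * zetaQ q r s t (z + 1) + zetaQ q (r - 1) s t z :=
  zetaQ_ladder_general hq0.ne' (by rwa [abs_of_pos hq0]) hr s
    (norm_ofReal_cpow_lt_one hq0 hq1 (by simpa using by linarith)) z
end

section
/- Let q be real with 0 < q < 1, let r ≥ 1 be an integer, and let z ∈ ℂ. Then for every integer n ≥ 0 one has the expansion [n+r−1; r−1]_q = ∑_{l=0}^{r−1} q^{n(r−1−l)} · P^l_{q,r}(z) · [n+z]_q^l. -/
/-!
Since `q ^ (v + w) = q ^ v * q ^ w`, the `q`-numbers satisfy `[v + w] = [v] + q ^ v [w]`; taking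
`v = n + m` and `w = z - m` gives `[n + m] = [n + z] - q ^ n (q ^ m [z - m])`. The `q`-binomial
coefficient is the product of the `[n + m]` over `1 ≤ m ≤ r - 1`, divided by `[r - 1]!`. After
substitution, every factor is affine in `[n + z]`, and the coefficients of the product are
elementary symmetric functions of the `q ^ m [z - m]`.
-/

open Complex

/-- The q-Pochhammer symbol `(a;q)_m = ∏_{j=0}^{m-1} (1 - a q^j)`. -/
noncomputable def qPoch (q a : ℝ) (m : ℕ) : ℝ := ∏ j ∈ Finset.range m, (1 - a * q ^ j)

/-- The q-binomial coefficient `[m; n]_q = (q;q)_m / ((q;q)_n (q;q)_{m-n})`. -/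
noncomputable def qBinom (q : ℝ) (m n : ℕ) : ℝ :=
  qPoch q q m / (qPoch q q n * qPoch q q (m - n))

/-- The q-factorial `[n]_q! = ∏_{k=1}^n [k]_q`. -/
noncomputable def qFact (q : ℝ) (n : ℕ) : ℝ := ∏ k ∈ Finset.Icc 1 n, (1 - q ^ k) / (1 - q)

/-- The coefficient `P^l_{q,r}(z)`: for `0 ≤ l ≤ r−1`,
`P^l_{q,r}(z) = ((−1)^{r−1−l}/[r−1]_q!) ∑_{1 ≤ m₁ < ⋯ < m_{r−1−l} ≤ r−1}
q^{m₁+⋯+m_{r−1−l}} [z−m₁]_q ⋯ [z−m_{r−1−l}]_q`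
(so that `P^{r−1}_{q,r}(z) = 1/[r−1]_q!`, the sum over the empty set being `1`). -/
noncomputable def Pq (q : ℝ) (r l : ℕ) (z : ℂ) : ℂ :=
  ((-1 : ℂ) ^ (r - 1 - l) / (qFact q (r - 1) : ℂ)) *
    ∑ A ∈ Finset.powersetCard (r - 1 - l) (Finset.Icc 1 (r - 1)),
      (q : ℂ) ^ (∑ m ∈ A, m) * ∏ m ∈ A, qNum q (z - (m : ℕ))

section SymmetricFunctions

open Finset Polynomial

lemma prod_add_const_mul_eq_sum_powersetCard {ι R : Type*} [CommSemiring R]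
    (s : Finset ι) (f : ι → R) (c x : R) :
    ∏ i ∈ s, (x + c * f i) =
      ∑ l ∈ range (#s + 1),
        c ^ (#s - l) * (∑ A ∈ powersetCard (#s - l) s, ∏ i ∈ A, f i) * x ^ l := by
  have hdeg : (∏ i ∈ s, (X + C (c * f i))).natDegree < #s + 1 := by
    have hlin (i : ι) : (X + C (c * f i)).natDegree ≤ 1 := natDegree_add_C.trans_le natDegree_X_le
    refine Nat.lt_succ_of_le ((natDegree_prod_le s _).trans ?_)
    simpa only [smul_eq_mul, mul_one] using sum_le_card_nsmul s _ 1 fun i _ => hlin i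
  calc ∏ i ∈ s, (x + c * f i) = (∏ i ∈ s, (X + C (c * f i))).eval x := by
        simp only [eval_prod, eval_add, eval_X, eval_C]
    _ = _ := by
        rw [eval_eq_sum_range' hdeg]
        refine sum_congr rfl fun l hl => ?_
        rw [prod_X_add_C_coeff s _ (Nat.lt_succ_iff.mp (mem_range.mp hl)), mul_sum]
        refine congrArg (· * x ^ l) (sum_congr rfl fun A hA => ?_)
        rw [prod_mul_distrib, prod_const, (mem_powersetCard.mp hA).2]

end SymmetricFunctions

section QAnalogues

variable (q : ℝ)

lemma qNum_natCast (k : ℕ) : qNum q k = ((1 - q ^ k) / (1 - q) : ℝ) := by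
  simp [qNum]

lemma qPoch_add (a : ℝ) (m n : ℕ) :
    qPoch q a (m + n) = qPoch q a m * qPoch q (a * q ^ m) n := by
  simp only [qPoch, Finset.prod_range_add, pow_add, mul_assoc]

lemma prod_Icc_one_sub_pow_div_eq_qPoch (n s : ℕ) :
    ∏ m ∈ Finset.Icc 1 s, (1 - q ^ (n + m)) / (1 - q) = qPoch q (q * q ^ n) s / (1 - q) ^ s := by
  rw [Finset.prod_div_distrib, Finset.prod_const, Nat.card_Icc, Nat.add_sub_cancel, qPoch,
    ← Finset.Ico_add_one_right_eq_Icc, Finset.prod_Ico_eq_prod_range, Nat.add_sub_cancel]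
  congr! 3
  ring

lemma qFact_eq_qPoch_div (s : ℕ) : qFact q s = qPoch q q s / (1 - q) ^ s := by
  simpa only [qFact, zero_add, pow_zero, mul_one] using prod_Icc_one_sub_pow_div_eq_qPoch q 0 s

lemma Pq_succ_eq_sum_powersetCard (s l : ℕ) (z : ℂ) :
    Pq q (s + 1) l z = (-1) ^ (s - l) / (qFact q s : ℂ) *
      ∑ A ∈ Finset.powersetCard (s - l) (Finset.Icc 1 s),
        ∏ m ∈ A, (q : ℂ) ^ m * qNum q (z - m) := by
  simp only [Pq, Nat.add_sub_cancel, Finset.prod_mul_distrib, ← Finset.prod_pow_eq_pow_sum]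

variable {q}

lemma qNum_add (hq : q ≠ 0) (v w : ℂ) : qNum q (v + w) = qNum q v + (q : ℂ) ^ v * qNum q w := by
  rw [qNum, qNum, qNum, cpow_add _ _ (ofReal_ne_zero.mpr hq)]
  ring

lemma qNum_natCast_add_eq_add_mul_qNum_sub (hq : q ≠ 0) (n m : ℕ) (z : ℂ) :
    qNum q ((n + m : ℕ) : ℂ) =
      qNum q (n + z) + -(q : ℂ) ^ n * ((q : ℂ) ^ m * qNum q (z - m)) := by
  have hsplit : (n : ℂ) + z = (n + m : ℕ) + (z - m) := by push_cast; ring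
  rw [hsplit, qNum_add hq, cpow_natCast, pow_add]
  ring

lemma qPoch_self_ne_zero (hq : |q| ≠ 1) (m : ℕ) : qPoch q q m ≠ 0 := by
  refine Finset.prod_ne_zero_iff.mpr fun j _ hj => hq ?_
  have hpow : q ^ (j + 1) = 1 := by rw [pow_succ']; linarith
  rw [← pow_eq_one_iff_of_nonneg (abs_nonneg q) j.succ_ne_zero, ← abs_pow, hpow, abs_one]

lemma qBinom_eq_prod_div_qFact (hq : |q| ≠ 1) (n s : ℕ) :
    qBinom q (n + s) s = (∏ m ∈ Finset.Icc 1 s, (1 - q ^ (n + m)) / (1 - q)) / qFact q s := by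
  have hq1 : 1 - q ≠ 0 := sub_ne_zero.mpr fun h => hq (by rw [← h, abs_one])
  rw [prod_Icc_one_sub_pow_div_eq_qPoch, qFact_eq_qPoch_div,
    div_div_div_cancel_right₀ (pow_ne_zero s hq1), qBinom, Nat.add_sub_cancel, qPoch_add,
    mul_comm (qPoch q q s), mul_div_mul_left _ _ (qPoch_self_ne_zero hq n)]

lemma qBinom_eq_prod_qNum_div_qFact (hq : |q| ≠ 1) (n s : ℕ) :
    (qBinom q (n + s) s : ℂ) =
      (∏ m ∈ Finset.Icc 1 s, qNum q ((n + m : ℕ) : ℂ)) / (qFact q s : ℂ) := by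
  simp only [qBinom_eq_prod_div_qFact hq, ofReal_div, ofReal_prod, qNum_natCast]

end QAnalogues

/-- For `q < 0`, the powers `q ^ w` in `qNum` are principal values. -/
theorem qBinom_expansion_general (q : ℝ) (hq0 : q ≠ 0) (hq1 : |q| ≠ 1) (r : ℕ) (hr : 1 ≤ r)
    (z : ℂ) (n : ℕ) :
    (qBinom q (n + r - 1) (r - 1) : ℂ)
      = ∑ l ∈ Finset.range r,
          (q : ℂ) ^ (n * (r - 1 - l)) * Pq q r l z * (qNum q ((n : ℂ) + z)) ^ l := by
  obtain ⟨s, rfl⟩ : ∃ s, r = s + 1 := ⟨r - 1, by omega⟩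
  rw [← Nat.add_assoc, Nat.add_sub_cancel, Nat.add_sub_cancel]
  calc (qBinom q (n + s) s : ℂ)
      = (∏ m ∈ Finset.Icc 1 s, qNum q ((n + m : ℕ) : ℂ)) / (qFact q s : ℂ) :=
        qBinom_eq_prod_qNum_div_qFact hq1 n s
    _ = (∏ m ∈ Finset.Icc 1 s,
          (qNum q (n + z) + -(q : ℂ) ^ n * ((q : ℂ) ^ m * qNum q (z - m)))) / (qFact q s : ℂ) := by
        simp only [qNum_natCast_add_eq_add_mul_qNum_sub hq0 n _ z]
    _ = _ := by
        -- The signs in `Pq` come from expanding with the constant `-q ^ n`.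
        rw [prod_add_const_mul_eq_sum_powersetCard, Nat.card_Icc, Nat.add_sub_cancel,
          Finset.sum_div]
        refine Finset.sum_congr rfl fun l _ => ?_
        rw [Pq_succ_eq_sum_powersetCard, neg_pow, ← pow_mul]
        ring

/-- For `0 < q < 1`, `r ≥ 1`, `z ∈ ℂ` and every `n ≥ 0`:
`[n+r−1; r−1]_q = ∑_{l=0}^{r−1} q^{n(r−1−l)} P^l_{q,r}(z) [n+z]_q^l`. -/
theorem qBinom_expansion (q : ℝ) (hq0 : 0 < q) (hq1 : q < 1) (r : ℕ) (hr : 1 ≤ r)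
    (z : ℂ) (n : ℕ) :
    (qBinom q (n + r - 1) (r - 1) : ℂ)
      = ∑ l ∈ Finset.range r,
          (q : ℂ) ^ (n * (r - 1 - l)) * Pq q r l z * (qNum q ((n : ℂ) + z)) ^ l :=
  qBinom_expansion_general q hq0.ne' (by rw [abs_of_pos hq0]; exact hq1.ne) r hr z n
end

section
/- Let r ≥ 1 and ν ≥ 1 be integers, let z ∈ ℂ with Re(z) > 0, and let s ∈ ℂ with Re(s) > r − 1 + ν. Then lim_{q → 1⁻} ζ_{q,r}(s, s−ν, z) = ζ_r(s,z), the limit being taken over real q increasing to 1 (all series involved converge absolutely in this range of parameters). -/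
/-!
The limit is taken termwise: `[w]_q` is the difference quotient at `q = 1` of `q ↦ q^w`, so it
tends to `w`, while `q^e → 1`.

For the domination, write `N = n₁ + ⋯ + n_r`, `w = N + z`, `M = Re w`, `σ = Re s` and
`δ = Re t - (r - 1) > 0`. The numerator has norm at most `q^{Nδ}`, a bounded multiple of `q^{Mδ}`.
The factor `q^{Mδ} = (q^{aM})^σ`, `a = δ/σ`, compensates for the fact that `[w]_q` stays bounded as
`M → ∞`: one has `M q^{aM} ≤ (1 + 1/a) |[w]_q|`. So the summand is at most a constant times
`M^{-σ}`, which is summable over `r`-tuples because `σ > r` and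
`M^{-σ} ≤ ∏ᵢ (nᵢ + Re z)^{-σ/r}`.
-/

open Complex

/-- The Barnes multiple zeta function `ζ_r(s,z) = ∑_{n₁,…,n_r ≥ 0} (n₁+⋯+n_r+z)^{−s}`
(principal complex powers). -/
noncomputable def zetaBarnes (r : ℕ) (s z : ℂ) : ℂ :=
  ∑' f : Fin r → ℕ, (((∑ i : Fin r, f i : ℕ) : ℂ) + z) ^ (-s)

open Filter Topology

theorem summable_pi_prod {ι : Type*} [Fintype ι] {κ : ι → Type*} {f : ∀ i, κ i → ℝ}
    (hf : ∀ i, Summable (f i)) (hf0 : ∀ i j, 0 ≤ f i j) :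
    Summable fun p : ∀ i, κ i => ∏ i, f i (p i) := by
  classical
  have hprod (p : ∀ i, κ i) : 0 ≤ ∏ i, f i (p i) := Finset.prod_nonneg fun i _ => hf0 i (p i)
  refine summable_of_sum_le (c := ∏ i, ∑' j, f i j) hprod fun u => ?_
  have hu : u ⊆ Fintype.piFinset fun i => u.image (· i) := fun p hp =>
    Fintype.mem_piFinset.2 fun i => Finset.mem_image_of_mem (· i) hp
  calc ∑ p ∈ u, ∏ i, f i (p i)
      ≤ ∑ p ∈ Fintype.piFinset fun i => u.image (· i), ∏ i, f i (p i) :=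
        Finset.sum_le_sum_of_subset_of_nonneg hu fun p _ _ => hprod p
    _ = ∏ i, ∑ j ∈ u.image (· i), f i j := (Finset.prod_univ_sum _ _).symm
    _ ≤ ∏ i, ∑' j, f i j :=
        Finset.prod_le_prod (fun i _ => Finset.sum_nonneg fun j _ => hf0 i j)
          fun i _ => (hf i).sum_le_tsum _ fun j _ => hf0 i j

theorem summable_nat_add_rpow {x σ : ℝ} (hx : 0 < x) (hσ : 1 < σ) :
    Summable fun n : ℕ => ((n : ℝ) + x) ^ (-σ) := by
  refine ((Real.summable_one_div_nat_add_rpow x σ).2 hσ).congr fun n => ?_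
  have hnx : (0 : ℝ) < n + x := by positivity
  rw [abs_of_pos hnx, Real.rpow_neg hnx.le, one_div]

theorem sum_add_rpow_le_prod {ι : Type*} [Fintype ι] [Nonempty ι] {x σ : ℝ} (hx : 0 < x)
    (hσ : 0 ≤ σ) (n : ι → ℕ) :
    (((∑ i, n i : ℕ) : ℝ) + x) ^ (-σ) ≤ ∏ i, ((n i : ℝ) + x) ^ (-(σ / Fintype.card ι)) := by
  have hpow : (((∑ i, n i : ℕ) : ℝ) + x) ^ (-σ)
      = ∏ _i : ι, (((∑ i, n i : ℕ) : ℝ) + x) ^ (-(σ / Fintype.card ι)) := by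
    rw [Finset.prod_const, Finset.card_univ, ← Real.rpow_mul_natCast (by positivity)]
    congr 1
    field_simp
  rw [hpow]
  refine Finset.prod_le_prod (fun i _ => by positivity) fun i _ => ?_
  have hi : n i ≤ ∑ i, n i := Finset.single_le_sum (fun _ _ => Nat.zero_le _) (Finset.mem_univ i)
  refine Real.rpow_le_rpow_of_nonpos (by positivity) (by gcongr) ?_
  rw [neg_nonpos]
  positivity

theorem summable_sum_add_rpow {ι : Type*} [Fintype ι] {x σ : ℝ} (hx : 0 < x)
    (hσ : (Fintype.card ι : ℝ) < σ) :
    Summable fun n : ι → ℕ => (((∑ i, n i : ℕ) : ℝ) + x) ^ (-σ) := by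
  cases isEmpty_or_nonempty ι
  · exact Summable.of_finite
  have hcard : (0 : ℝ) < Fintype.card ι := Nat.cast_pos.2 Fintype.card_pos
  have hnat : Summable fun k : ℕ => ((k : ℝ) + x) ^ (-(σ / Fintype.card ι)) :=
    summable_nat_add_rpow hx ((one_lt_div hcard).2 hσ)
  have hprod := summable_pi_prod (fun _ : ι => hnat) fun _ _ => by positivity
  exact hprod.of_nonneg_of_le (fun n => by positivity)
    (sum_add_rpow_le_prod hx (hcard.trans hσ).le)

theorem norm_cpow_le_rpow_mul_exp (w s : ℂ) :
    ‖w ^ s‖ ≤ ‖w‖ ^ s.re * Real.exp (Real.pi * |s.im|) := by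
  have harg : -(w.arg * s.im) ≤ Real.pi * |s.im| :=
    calc -(w.arg * s.im) ≤ |w.arg * s.im| := neg_le_abs _
      _ = |w.arg| * |s.im| := abs_mul _ _
      _ ≤ Real.pi * |s.im| := by gcongr; exact abs_arg_le_pi w
  calc ‖w ^ s‖ ≤ ‖w‖ ^ s.re / Real.exp (w.arg * s.im) := norm_cpow_le w s
    _ = ‖w‖ ^ s.re * Real.exp (-(w.arg * s.im)) := by rw [Real.exp_neg, div_eq_mul_inv]
    _ ≤ ‖w‖ ^ s.re * Real.exp (Real.pi * |s.im|) := by gcongr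

theorem rpow_mul_neg_log_le {a y : ℝ} (ha : 0 < a) (hy0 : 0 < y) (hy1 : y ≤ 1) :
    y ^ a * -Real.log y ≤ (1 + 1 / a) * (1 - y) := by
  have hlog : -Real.log y ≤ (1 - Real.log y) * (1 - y) := by
    have h : y * (1 - Real.log y) ≤ y * y⁻¹ := by
      gcongr
      linarith only [Real.one_sub_inv_le_log_of_pos hy0]
    rw [mul_inv_cancel₀ hy0.ne'] at h
    linarith
  have hpow : y ^ a ≤ 1 := Real.rpow_le_one hy0.le hy1 ha.le
  have hpow_log : -(Real.log y * y ^ a) ≤ 1 / a :=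
    (neg_le_abs _).trans (Real.abs_log_mul_self_rpow_lt y a hy0 hy1 ha).le
  calc y ^ a * -Real.log y ≤ y ^ a * ((1 - Real.log y) * (1 - y)) := by gcongr
    _ = (y ^ a + -(Real.log y * y ^ a)) * (1 - y) := by ring
    _ ≤ (1 + 1 / a) * (1 - y) := by gcongr

section qNum

variable {q : ℝ} {w : ℂ}

theorem one_sub_rpow_re_div_le_norm_qNum (hq0 : 0 < q) (hq1 : q < 1) :
    (1 - q ^ w.re) / (1 - q) ≤ ‖qNum q w‖ := by
  have hden : ‖(1 : ℂ) - q‖ = 1 - q := by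
    rw [← ofReal_one, ← ofReal_sub, norm_real, Real.norm_of_nonneg (sub_pos.2 hq1).le]
  have hnum : 1 - q ^ w.re ≤ ‖1 - (q : ℂ) ^ w‖ := by
    simpa only [norm_one, norm_cpow_eq_rpow_re_of_pos hq0]
      using norm_sub_norm_le (1 : ℂ) ((q : ℂ) ^ w)
  rw [qNum, norm_div, hden]
  exact div_le_div_of_nonneg_right hnum (sub_pos.2 hq1).le

theorem qNum_ne_zero (hq0 : 0 < q) (hq1 : q < 1) (hw : 0 < w.re) : qNum q w ≠ 0 :=
  norm_pos_iff.1 <| (div_pos (sub_pos.2 (Real.rpow_lt_one hq0.le hq1 hw)) (sub_pos.2 hq1)).trans_le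
    (one_sub_rpow_re_div_le_norm_qNum hq0 hq1)

theorem re_mul_rpow_le_norm_qNum {a : ℝ} (ha : 0 < a) (hq0 : 0 < q) (hq1 : q < 1)
    (hw : 0 ≤ w.re) : w.re * q ^ (a * w.re) ≤ (1 + 1 / a) * ‖qNum q w‖ := by
  have hq : 0 < 1 - q := sub_pos.2 hq1
  have hlog : w.re * (1 - q) ≤ -Real.log (q ^ w.re) := by
    rw [Real.log_rpow hq0, ← mul_neg]
    gcongr
    linarith [Real.log_le_sub_one_of_pos hq0]
  calc w.re * q ^ (a * w.re) = (q ^ w.re) ^ a * (w.re * (1 - q)) / (1 - q) := by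
        rw [mul_comm a, Real.rpow_mul hq0.le]
        field_simp
    _ ≤ (q ^ w.re) ^ a * -Real.log (q ^ w.re) / (1 - q) := by gcongr
    _ ≤ (1 + 1 / a) * (1 - q ^ w.re) / (1 - q) :=
        div_le_div_of_nonneg_right
          (rpow_mul_neg_log_le ha (by positivity) (Real.rpow_le_one hq0.le hq1.le hw)) hq.le
    _ = (1 + 1 / a) * ((1 - q ^ w.re) / (1 - q)) := mul_div_assoc _ _ _
    _ ≤ (1 + 1 / a) * ‖qNum q w‖ := by
        gcongr
        exact one_sub_rpow_re_div_le_norm_qNum hq0 hq1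

theorem norm_cpow_div_qNum_cpow_le (hq0 : 0 < q) (hq1 : q < 1) (hw : 0 < w.re) (e : ℂ) {s : ℂ}
    (hs : 0 < s.re) {δ : ℝ} (hδ : 0 < δ) :
    ‖(q : ℂ) ^ e / qNum q w ^ s‖ ≤ Real.exp (Real.pi * |s.im|) * (1 + s.re / δ) ^ s.re
      * q ^ (e.re - δ * w.re) * w.re ^ (-s.re) := by
  have hqNum : 0 < ‖qNum q w‖ := norm_pos_iff.2 (qNum_ne_zero hq0 hq1 hw)
  have hnum : ‖(q : ℂ) ^ e‖ = q ^ (e.re - δ * w.re) * (q ^ (δ / s.re * w.re)) ^ s.re := by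
    rw [norm_cpow_eq_rpow_re_of_pos hq0, ← Real.rpow_mul hq0.le, ← Real.rpow_add hq0]
    congr 1
    field_simp
    ring
  have hden : ‖qNum q w ^ (-s)‖ ≤ ‖qNum q w‖ ^ (-s.re) * Real.exp (Real.pi * |s.im|) := by
    simpa only [neg_re, neg_im, abs_neg] using norm_cpow_le_rpow_mul_exp (qNum q w) (-s)
  have hratio : q ^ (δ / s.re * w.re) / ‖qNum q w‖ ≤ (1 + s.re / δ) / w.re := by
    have h := re_mul_rpow_le_norm_qNum (div_pos hδ hs) hq0 hq1 hw.le
    rw [one_div_div] at h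
    rwa [div_le_div_iff₀ hqNum hw, mul_comm]
  calc ‖(q : ℂ) ^ e / qNum q w ^ s‖
      = q ^ (e.re - δ * w.re) * (q ^ (δ / s.re * w.re)) ^ s.re * ‖qNum q w ^ (-s)‖ := by
        rw [div_eq_mul_inv, ← cpow_neg, norm_mul, hnum]
    _ ≤ q ^ (e.re - δ * w.re) * (q ^ (δ / s.re * w.re)) ^ s.re
        * (‖qNum q w‖ ^ (-s.re) * Real.exp (Real.pi * |s.im|)) := by gcongr
    _ = Real.exp (Real.pi * |s.im|) * q ^ (e.re - δ * w.re)
        * (q ^ (δ / s.re * w.re) / ‖qNum q w‖) ^ s.re := by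
        rw [Real.div_rpow (by positivity) hqNum.le, Real.rpow_neg hqNum.le]
        ring
    _ ≤ Real.exp (Real.pi * |s.im|) * q ^ (e.re - δ * w.re)
        * ((1 + s.re / δ) / w.re) ^ s.re := by gcongr
    _ = Real.exp (Real.pi * |s.im|) * (1 + s.re / δ) ^ s.re * q ^ (e.re - δ * w.re)
        * w.re ^ (-s.re) := by
        rw [Real.div_rpow (by positivity) hw.le, Real.rpow_neg hw.le]
        ring

end qNum

theorem mul_sum_le_re_sum_mul_sub {r : ℕ} (t : ℂ) (n : Fin r → ℕ) :
    (t.re - (r - 1)) * (∑ i, n i : ℕ) ≤ (∑ i : Fin r, (n i : ℂ) * (t - (i : ℕ))).re := by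
  rw [re_sum, Nat.cast_sum, Finset.mul_sum]
  refine Finset.sum_le_sum fun i _ => ?_
  have hi : ((i : ℕ) : ℝ) + 1 ≤ r := by exact_mod_cast i.2
  rw [← ofReal_natCast (n i), re_ofReal_mul, sub_re, natCast_re, mul_comm]
  gcongr
  linarith

theorem norm_zetaQ_summand_le {q : ℝ} (hq : 1 / 2 ≤ q) (hq1 : q < 1) {r : ℕ} {s t z : ℂ}
    (hz : 0 < z.re) (hs : 0 < s.re) (ht : (r : ℝ) - 1 < t.re) (n : Fin r → ℕ) :
    ‖(q : ℂ) ^ (∑ i : Fin r, (n i : ℂ) * (t - (i : ℕ)))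
        / qNum q (((∑ i, n i : ℕ) : ℂ) + z) ^ s‖
      ≤ Real.exp (Real.pi * |s.im|) * (1 + s.re / (t.re - (r - 1))) ^ s.re
        * 2 ^ ((t.re - (r - 1)) * z.re) * (((∑ i, n i : ℕ) : ℝ) + z.re) ^ (-s.re) := by
  have hq0 : 0 < q := by linarith
  have hexp := mul_sum_le_re_sum_mul_sub t n
  have hδ : 0 < t.re - (r - 1) := sub_pos.2 ht
  have hre : (((∑ i, n i : ℕ) : ℂ) + z).re = ((∑ i, n i : ℕ) : ℝ) + z.re := by
    rw [add_re, natCast_re]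
  have hw : 0 < (((∑ i, n i : ℕ) : ℂ) + z).re := by rw [hre]; positivity
  have hbound := norm_cpow_div_qNum_cpow_le hq0 hq1 hw
    (∑ i : Fin r, (n i : ℂ) * (t - (i : ℕ))) hs hδ
  rw [hre] at hbound
  refine hbound.trans ?_
  gcongr
  calc q ^ ((∑ i : Fin r, (n i : ℂ) * (t - (i : ℕ))).re
        - (t.re - (r - 1)) * (((∑ i, n i : ℕ) : ℝ) + z.re))
      ≤ q ^ (-((t.re - (r - 1)) * z.re)) :=
        Real.rpow_le_rpow_of_exponent_ge hq0 hq1.le (by linarith)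
    _ ≤ (1 / 2) ^ (-((t.re - (r - 1)) * z.re)) :=
        Real.rpow_le_rpow_of_nonpos (by norm_num) hq (neg_nonpos.2 (mul_pos hδ hz).le)
    _ = 2 ^ ((t.re - (r - 1)) * z.re) := by rw [one_div, Real.rpow_neg_eq_inv_rpow, inv_inv]

theorem tendsto_qNum (w : ℂ) : Tendsto (fun q : ℝ => qNum q w) (𝓝[≠] 1) (𝓝 w) := by
  have hderiv : HasDerivAt (fun q : ℝ => (q : ℂ) ^ w) w 1 := by
    have h : HasDerivAt (fun y : ℂ => y ^ w) w ((1 : ℝ) : ℂ) := by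
      simpa using (hasDerivAt_id (1 : ℂ)).cpow_const (c := w) (by simp)
    exact h.comp_ofReal
  refine (hasDerivAt_iff_tendsto_slope.1 hderiv).congr fun q => ?_
  rw [slope_def_module, qNum, real_smul, ofReal_inv, ofReal_sub, ofReal_one, one_cpow,
    inv_mul_eq_div, ← neg_sub 1 ((q : ℂ) ^ w), ← neg_sub 1 (q : ℂ), neg_div_neg_eq]

theorem tendsto_cpow_div_qNum_cpow (e s : ℂ) {w : ℂ} (hw : w ∈ slitPlane) :
    Tendsto (fun q : ℝ => (q : ℂ) ^ e / qNum q w ^ s) (𝓝[≠] 1) (𝓝 (w ^ (-s))) := by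
  have hnum : Tendsto (fun q : ℝ => (q : ℂ) ^ e) (𝓝[≠] 1) (𝓝 1) := by
    have h : ContinuousAt (fun q : ℝ => (q : ℂ) ^ e) 1 :=
      continuous_ofReal.continuousAt.cpow continuousAt_const (by simp)
    simpa only [ofReal_one, one_cpow] using h.tendsto.mono_left nhdsWithin_le_nhds
  have hden := (tendsto_qNum w).cpow (tendsto_const_nhds (x := s)) hw
  have hw0 : w ^ s ≠ 0 := cpow_ne_zero_iff.2 (.inl (slitPlane_ne_zero hw))
  simpa only [Pi.div_def, one_div, ← cpow_neg] using hnum.div hden hw0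

theorem tendsto_zetaQ_zetaBarnes_general {r : ℕ} {s t z : ℂ} (hz : 0 < z.re) (hs : r < s.re)
    (ht : (r : ℝ) - 1 < t.re) :
    Tendsto (fun q : ℝ => zetaQ q r s t z) (𝓝[Set.Ioo 0 1] 1) (𝓝 (zetaBarnes r s z)) := by
  have hmajorant : Summable fun n : Fin r → ℕ => (((∑ i, n i : ℕ) : ℝ) + z.re) ^ (-s.re) :=
    summable_sum_add_rpow hz (by rwa [Fintype.card_fin])
  refine tendsto_tsum_of_dominated_convergence (hmajorant.mul_left ?C) (fun n => ?limit) ?bound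
  case limit =>
    have hw : 0 < (((∑ i, n i : ℕ) : ℂ) + z).re := by
      rw [add_re, natCast_re]
      positivity
    exact (tendsto_cpow_div_qNum_cpow _ s (.inl hw)).mono_left
      (nhdsWithin_mono 1 fun q hq => hq.2.ne)
  case bound =>
    have hhalf : ∀ᶠ q : ℝ in 𝓝[Set.Ioo 0 1] 1, 1 / 2 ≤ q :=
      nhdsWithin_le_nhds (Ici_mem_nhds (by norm_num))
    filter_upwards [hhalf, self_mem_nhdsWithin] with q hq hq01 n
    exact norm_zetaQ_summand_le hq hq01.2 hz (r.cast_nonneg.trans_lt hs) ht n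

/-- For integers `r, ν ≥ 1`, `Re z > 0` and `Re s > r − 1 + ν`:
`lim_{q↑1} ζ_{q,r}(s, s−ν, z) = ζ_r(s,z)`, the limit being over real `q`
increasing to `1` (within `(0,1)`). -/
theorem tendsto_zetaQ_zetaBarnes (r ν : ℕ) (hr : 1 ≤ r) (hν : 1 ≤ ν) (s z : ℂ)
    (hz : 0 < z.re) (hs : (r : ℝ) - 1 + ν < s.re) :
    Filter.Tendsto (fun q : ℝ => zetaQ q r s (s - (ν : ℂ)) z)
      (nhdsWithin 1 (Set.Ioo 0 1)) (nhds (zetaBarnes r s z)) := by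
  have hν' : (1 : ℝ) ≤ ν := Nat.one_le_cast.2 hν
  exact tendsto_zetaQ_zetaBarnes_general hz (by linarith) (by rw [sub_re, natCast_re]; linarith)
end

section
/- Let q be real with 0 < q < 1 and let n ≥ 1 be an integer. Then Γ̃_q(n+1) = q^{−∑_{k=1}^{n} k·q^{−k}} · ∏_{k=1}^{n} ([k]_q)^{q^{−k}}; equivalently, F_q(n+1) = −(log q)·∑_{k=1}^{n} k·q^{−k} + ∑_{k=1}^{n} q^{−k} · log [k]_q. -/
/-- The logarithm `F_q(z) = log Γ̃_q(z)` of the `q`-gamma function associated with the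
`q`-Hurwitz zeta function, given by its explicit closed form: for real `z > 0`,
`F_q(z) = ∑_{n=2}^∞ (1/n)(q^{z(n−1)} − q^{n−1})/(1 − q^{n−1}) − z + 1
  + ((q^{−z}(1 − (1−q)z) − 1)/(1−q)²) q log q + ((1 − q^{1−z})/(1−q)) log(1−q)`
(real powers of `q` via `rpow`). -/
noncomputable def Fq (q z : ℝ) : ℝ :=
  (∑' n : ℕ, (1 / ((n : ℝ) + 2)) *
      (q ^ (z * ((n : ℝ) + 1)) - q ^ ((n : ℝ) + 1)) / (1 - q ^ ((n : ℝ) + 1)))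
    - z + 1
    + ((q ^ (-z) * (1 - (1 - q) * z) - 1) / (1 - q) ^ 2) * q * Real.log q
    + ((1 - q ^ (1 - z)) / (1 - q)) * Real.log (1 - q)

/-- The `q`-gamma function `Γ̃_q(z) = exp F_q(z)` associated with the `q`-Hurwitz zeta
function. -/
noncomputable def GammaQ (q z : ℝ) : ℝ := Real.exp (Fq q z)

/-!
`F_q` vanishes at `z = 1` and satisfies the functional equation
`F_q(z + 1) = F_q(z) - z q^{-z} log q + q^{-z} log [z]_q` for `z > 0`, which is iterated. With
`x = q^z`, the series is `∑_{m ≥ 1} (x^m - q^m) / ((m + 1)(1 - q^m))`. Passing from `z` to `z + 1`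
multiplies `x` by `q`, so the numerator drops by `x^m (1 - q^m)`, which cancels the denominator:
the series drops by `∑_{m ≥ 1} x^m / (m + 1) = -log(1 - x) / x - 1`.
-/

open Real

/-- The terms of the series in `Fq q z`. The index starts at `0`, so `fqTerm q z n` is the term
of index `n + 2` in the usual notation. -/
noncomputable def fqTerm (q z : ℝ) (n : ℕ) : ℝ :=
  (1 / ((n : ℝ) + 2)) *
      (q ^ (z * ((n : ℝ) + 1)) - q ^ ((n : ℝ) + 1)) / (1 - q ^ ((n : ℝ) + 1))

theorem Fq_eq_tsum_fqTerm (q z : ℝ) :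
    Fq q z = ∑' n, fqTerm q z n - z + 1
      + ((q ^ (-z) * (1 - (1 - q) * z) - 1) / (1 - q) ^ 2) * q * log q
      + ((1 - q ^ (1 - z)) / (1 - q)) * log (1 - q) :=
  rfl

theorem fqTerm_one (q : ℝ) : fqTerm q 1 = 0 := by
  funext n
  simp [fqTerm]

theorem hasSum_pow_succ_div_add_two {x : ℝ} (hx : |x| < 1) (hx₀ : x ≠ 0) :
    HasSum (fun n : ℕ => x ^ (n + 1) / ((n : ℝ) + 2)) (-log (1 - x) / x - 1) := by
  have htail : HasSum (fun n : ℕ => x ^ (n + 2) / ((n : ℝ) + 2)) (-log (1 - x) - x) := by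
    simpa [add_assoc, one_add_one_eq_two] using
      (hasSum_nat_add_iff' 1).mpr (hasSum_pow_div_log_of_abs_lt_one hx)
  convert! htail.div_const x using 1
  · funext n
    rw [pow_succ x (n + 1)]
    field_simp
  · field_simp

section

variable {q : ℝ}

theorem fqTerm_eq_pow (hq₀ : 0 ≤ q) (z : ℝ) (n : ℕ) :
    fqTerm q z n = ((q ^ z) ^ (n + 1) - q ^ (n + 1)) / (((n : ℝ) + 2) * (1 - q ^ (n + 1))) := by
  have hz : q ^ (z * ((n : ℝ) + 1)) = (q ^ z) ^ (n + 1) := by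
    exact_mod_cast rpow_mul_natCast hq₀ z (n + 1)
  have hq : q ^ ((n : ℝ) + 1) = q ^ (n + 1) := by
    exact_mod_cast rpow_natCast q (n + 1)
  rw [fqTerm, hz, hq, one_div_mul_eq_div, div_div]

theorem fqTerm_add_one (hq₀ : 0 < q) (hq₁ : q < 1) (z : ℝ) (n : ℕ) :
    fqTerm q (z + 1) n = fqTerm q z n - (q ^ z) ^ (n + 1) / ((n : ℝ) + 2) := by
  have hden : 1 - q ^ (n + 1) ≠ 0 := (sub_pos.mpr (pow_lt_one₀ hq₀.le hq₁ n.succ_ne_zero)).ne'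
  rw [fqTerm_eq_pow hq₀.le, fqTerm_eq_pow hq₀.le, rpow_add_one hq₀.ne', mul_pow]
  field_simp
  ring

theorem abs_fqTerm_le (hq₀ : 0 ≤ q) (hq₁ : q < 1) (z : ℝ) (n : ℕ) :
    |fqTerm q z n| ≤ ((q ^ z) ^ (n + 1) + q ^ (n + 1)) / (1 - q) := by
  have hx : 0 ≤ q ^ z := rpow_nonneg hq₀ z
  have hgap : 0 < 1 - q := sub_pos.mpr hq₁
  have hden : 1 - q ≤ ((n : ℝ) + 2) * (1 - q ^ (n + 1)) :=
    calc 1 - q ≤ 1 - q ^ (n + 1) :=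
          sub_le_sub_left (pow_le_of_le_one hq₀ hq₁.le n.succ_ne_zero) 1
      _ ≤ ((n : ℝ) + 2) * (1 - q ^ (n + 1)) :=
          le_mul_of_one_le_left (sub_nonneg.mpr (pow_le_one₀ hq₀ hq₁.le))
            (by linarith [n.cast_nonneg (α := ℝ)])
  have hnum : |(q ^ z) ^ (n + 1) - q ^ (n + 1)| ≤ (q ^ z) ^ (n + 1) + q ^ (n + 1) := by
    simpa only [abs_of_nonneg (pow_nonneg hx _), abs_of_nonneg (pow_nonneg hq₀ _)] using
      abs_sub ((q ^ z) ^ (n + 1)) (q ^ (n + 1))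
  rw [fqTerm_eq_pow hq₀, abs_div, abs_of_pos (hgap.trans_le hden)]
  gcongr

theorem summable_fqTerm (hq₀ : 0 ≤ q) (hq₁ : q < 1) {z : ℝ} (hz : 0 < z) :
    Summable (fqTerm q z) := by
  have hgeom {x : ℝ} (hx₀ : 0 ≤ x) (hx₁ : x < 1) : Summable fun n : ℕ => x ^ (n + 1) :=
    (summable_nat_add_iff 1).mpr (summable_geometric_of_lt_one hx₀ hx₁)
  have hx := hgeom (rpow_nonneg hq₀ z) (rpow_lt_one hq₀ hq₁ hz)
  exact .of_norm_bounded ((hx.add (hgeom hq₀ hq₁)).div_const (1 - q))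
    (abs_fqTerm_le hq₀ hq₁ z)

theorem tsum_fqTerm_add_one (hq₀ : 0 < q) (hq₁ : q < 1) {z : ℝ} (hz : 0 < z) :
    ∑' n, fqTerm q (z + 1) n = ∑' n, fqTerm q z n + log (1 - q ^ z) / q ^ z + 1 := by
  have hx₀ : 0 < q ^ z := rpow_pos_of_pos hq₀ z
  have hx₁ : |q ^ z| < 1 := (abs_of_pos hx₀).trans_lt (rpow_lt_one hq₀.le hq₁ hz)
  have hlog := hasSum_pow_succ_div_add_two hx₁ hx₀.ne'
  simp_rw [fqTerm_add_one hq₀ hq₁]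
  rw [(summable_fqTerm hq₀.le hq₁ hz).tsum_sub hlog.summable, hlog.tsum_eq]
  ring

theorem Fq_one (hq : q ≠ 0) : Fq q 1 = 0 := by
  simp [Fq_eq_tsum_fqTerm, fqTerm_one, rpow_neg_one, hq]

theorem Fq_add_one (hq₀ : 0 < q) (hq₁ : q < 1) {z : ℝ} (hz : 0 < z) :
    Fq q (z + 1) =
      Fq q z - log q * (z * q ^ (-z)) + q ^ (-z) * log ((1 - q ^ z) / (1 - q)) := by
  have hx : q ^ z ≠ 0 := (rpow_pos_of_pos hq₀ z).ne'
  have hgap : 1 - q ≠ 0 := (sub_pos.mpr hq₁).ne'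
  have hgap_z : 1 - q ^ z ≠ 0 := (sub_pos.mpr (rpow_lt_one hq₀.le hq₁ hz)).ne'
  have hneg : q ^ (-(z + 1)) = (q ^ z)⁻¹ / q := by
    rw [rpow_neg hq₀.le, rpow_add_one hq₀.ne', mul_inv, div_eq_mul_inv]
  have hsub : q ^ (1 - z) = q / q ^ z := by rw [rpow_sub hq₀, rpow_one]
  have hsub_succ : q ^ (1 - (z + 1)) = (q ^ z)⁻¹ := by
    rw [sub_add_cancel_right, rpow_neg hq₀.le]
  rw [Fq_eq_tsum_fqTerm, Fq_eq_tsum_fqTerm, tsum_fqTerm_add_one hq₀ hq₁ hz,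
    log_div hgap_z hgap, hneg, hsub, hsub_succ, rpow_neg hq₀.le]
  field_simp
  ring

theorem Fq_natCast_add_one (hq₀ : 0 < q) (hq₁ : q < 1) (n : ℕ) :
    Fq q ((n : ℝ) + 1)
      = -log q * (∑ k ∈ Finset.Icc 1 n, (k : ℝ) * q ^ (-(k : ℝ)))
        + ∑ k ∈ Finset.Icc 1 n, q ^ (-(k : ℝ)) * log ((1 - q ^ (k : ℝ)) / (1 - q)) := by
  induction n with
  | zero => simp [Fq_one hq₀.ne']
  | succ n ih =>
    rw [Nat.cast_succ, Fq_add_one hq₀ hq₁ n.cast_add_one_pos, ih,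
      Finset.sum_Icc_succ_top n.succ_pos, Finset.sum_Icc_succ_top n.succ_pos, Nat.cast_succ]
    ring

end

/-- For `0 < q < 1` and an integer `n ≥ 1`:
`Γ̃_q(n+1) = q^{−∑_{k=1}^n k q^{−k}} ∏_{k=1}^n ([k]_q)^{q^{−k}}`; equivalently,
`F_q(n+1) = −(log q) ∑_{k=1}^n k q^{−k} + ∑_{k=1}^n q^{−k} log [k]_q`. -/
theorem GammaQ_nat_succ (q : ℝ) (hq0 : 0 < q) (hq1 : q < 1) (n : ℕ) (hn : 1 ≤ n) :
    GammaQ q ((n : ℝ) + 1)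
      = q ^ (-(∑ k ∈ Finset.Icc 1 n, (k : ℝ) * q ^ (-(k : ℝ)))) *
          ∏ k ∈ Finset.Icc 1 n, ((1 - q ^ (k : ℝ)) / (1 - q)) ^ (q ^ (-(k : ℝ))) ∧
    Fq q ((n : ℝ) + 1)
      = -Real.log q * (∑ k ∈ Finset.Icc 1 n, (k : ℝ) * q ^ (-(k : ℝ)))
        + ∑ k ∈ Finset.Icc 1 n, q ^ (-(k : ℝ)) * Real.log ((1 - q ^ (k : ℝ)) / (1 - q)) := by
  have hF := Fq_natCast_add_one hq0 hq1 n
  refine ⟨?_, hF⟩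
  have hbracket_pos : ∀ k ∈ Finset.Icc 1 n, 0 < (1 - q ^ (k : ℝ)) / (1 - q) := fun k hk =>
    have hk_pos : (0 : ℝ) < k := Nat.cast_pos.mpr (Finset.mem_Icc.mp hk).1
    div_pos (sub_pos.mpr (rpow_lt_one hq0.le hq1 hk_pos)) (sub_pos.mpr hq1)
  rw [GammaQ, hF, exp_add, exp_sum, neg_mul_comm, ← rpow_def_of_pos hq0]
  congr 1
  refine Finset.prod_congr rfl fun k hk => ?_
  rw [rpow_def_of_pos (hbracket_pos k hk), mul_comm]
end
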